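/- arXiv:1906.06458 — 2 statements merged into one kernel-verified Lean document; each statement's English description precedes it below -/
import Mathlib

section
/- Assume the Goldberg–Seymour conjecture holds, i.e., every finite loopless multigraph H satisfies χ'(H) ≤ max{Δ(H)+1, ⌈Γ(H)⌉}. Then every finite loopless multigraph G satisfies: ξ(G) ≥ min{δ(G)−1, ⌊Φ(G)⌋} if Φ(G) is not an integer, and ξ(G) ≥ min{δ(G)−2, ⌊Φ(G)⌋−1} if Φ(G) is an integer. -/
open Finset

variable {V E : Type} [Fintype V] [DecidableEq V] [Fintype E]

/-- A multigraph given by an incidence map `ends : E → Sym2 V` is loopless if no edge is a loop. -/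
def Loopless (ends : E → Sym2 V) : Prop := ∀ e : E, ¬ (ends e).IsDiag

/-- The degree of a vertex: the number of edges incident with it. -/
def mDegree (ends : E → Sym2 V) (v : V) : ℕ :=
  (univ.filter fun e => v ∈ ends e).card

/-- The minimum degree δ(G). -/
noncomputable def minDegree (ends : E → Sym2 V) : ℕ :=
  sInf (Set.range (mDegree ends))

/-- The maximum degree Δ(G). -/
noncomputable def maxDegree (ends : E → Sym2 V) : ℕ :=
  sSup (Set.range (mDegree ends))

/-- The maximum multiplicity μ(G) of an edge. -/
noncomputable def maxMultiplicity (ends : E → Sym2 V) : ℕ :=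
  sSup (Set.range fun e : E => (univ.filter fun f : E => ends f = ends e).card)

/-- `E(U)`: the set of edges with both ends in `U`. -/
def edgesIn (ends : E → Sym2 V) (U : Finset V) : Finset E :=
  univ.filter fun e => ∀ v ∈ ends e, v ∈ U

/-- `E⁺(U)`: the set of edges with at least one end in `U`. -/
def edgesPlus (ends : E → Sym2 V) (U : Finset V) : Finset E :=
  univ.filter fun e => ∃ v ∈ ends e, v ∈ U

/-- `F(U)`: the set of edges with exactly one end in `U`. -/
def edgesF (ends : E → Sym2 V) (U : Finset V) : Finset E :=
  univ.filter fun e => (∃ v ∈ ends e, v ∈ U) ∧ ¬ ∀ v ∈ ends e, v ∈ U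

/-- `E(X,Y)`: the set of edges with one end in `X` and the other end in `Y`. -/
def edgesBetween (ends : E → Sym2 V) (X Y : Finset V) : Finset E :=
  univ.filter fun e => ∃ x ∈ X, ∃ y ∈ Y, ends e = s(x, y)

/-- An odd set: a vertex set of odd size at least 3. -/
def IsOddSet (U : Finset V) : Prop := 3 ≤ U.card ∧ Odd U.card

/-- A proper edge coloring: each vertex is incident with at most one edge of each color. -/
def IsProperEdgeColoring (ends : E → Sym2 V) {k : ℕ} (c : E → Fin k) : Prop :=
  ∀ v : V, ∀ e f : E, v ∈ ends e → v ∈ ends f → c e = c f → e = f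

/-- The chromatic index χ'(G). -/
noncomputable def chromaticIndex (ends : E → Sym2 V) : ℕ :=
  sInf {k : ℕ | ∃ c : E → Fin k, IsProperEdgeColoring ends c}

/-- A cover coloring: each vertex is incident with at least one edge of each color. -/
def IsCoverColoring (ends : E → Sym2 V) {k : ℕ} (c : E → Fin k) : Prop :=
  ∀ (v : V) (i : Fin k), ∃ e : E, v ∈ ends e ∧ c e = i

/-- The cover index ξ(G). -/
noncomputable def coverIndex (ends : E → Sym2 V) : ℕ :=
  sSup {k : ℕ | ∃ c : E → Fin k, IsCoverColoring ends c}

/-- The density Γ(G) = max over odd sets U of 2|E(U)|/(|U|-1). -/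
noncomputable def density (ends : E → Sym2 V) : ℝ :=
  sSup {x : ℝ | ∃ U : Finset V, IsOddSet U ∧
    x = 2 * (edgesIn ends U).card / ((U.card : ℝ) - 1)}

/-- The co-density Φ(G) = min over odd sets U of 2|E⁺(U)|/(|U|+1). -/
noncomputable def codensity (ends : E → Sym2 V) : ℝ :=
  sInf {x : ℝ | ∃ U : Finset V, IsOddSet U ∧
    x = 2 * (edgesPlus ends U).card / ((U.card : ℝ) + 1)}


set_option linter.unusedSectionVars false

/-! ### Partial incidence structures

A family `I : E → Finset V` records, for every edge, the ends that it still retains. -/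

/-- The degree of a vertex with respect to the retained incidences. -/
def incDegree (I : E → Finset V) (v : V) : ℕ :=
  #{e | v ∈ I e}

/-- The edges that retain at least one end in `U`. -/
def incPlus (I : E → Finset V) (U : Finset V) : Finset E :=
  {e | ¬ Disjoint (I e) U}

/-- Every set of odd size is met by more than `k * (|U| + 1) / 2` edges. -/
def IsCoverDense (k : ℕ) (I : E → Finset V) : Prop :=
  ∀ U : Finset V, Odd #U → k * (#U + 1) + 2 ≤ 2 * #(incPlus I U)

/-- `U` attains equality in the inequality defining `IsCoverDense`. -/
def IsTightSet (k : ℕ) (I : E → Finset V) (U : Finset V) : Prop :=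
  Odd #U ∧ 2 * #(incPlus I U) = k * (#U + 1) + 2

lemma incPlus_singleton (I : E → Finset V) (v : V) : #(incPlus I {v}) = incDegree I v := by
  simp [incPlus, incDegree]

lemma card_incPlus_inter_add_card_incPlus_union_le (I : E → Finset V) (U T : Finset V) :
    #(incPlus I (U ∩ T)) + #(incPlus I (U ∪ T)) ≤ #(incPlus I U) + #(incPlus I T) := by
  classical
  have hinter : incPlus I (U ∩ T) ⊆ incPlus I U ∩ incPlus I T := by
    intro e
    simp only [incPlus, mem_inter, mem_filter, mem_univ, true_and]
    exact fun h => ⟨fun h' => h (h'.mono_right inter_subset_left),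
      fun h' => h (h'.mono_right inter_subset_right)⟩
  have hunion : incPlus I (U ∪ T) = incPlus I U ∪ incPlus I T := by
    ext e
    simp only [incPlus, mem_union, mem_filter, mem_univ, true_and, disjoint_union_right]
    tauto
  have := card_le_card hinter
  rw [hunion]
  have := card_union_add_card_inter (incPlus I U) (incPlus I T)
  omega

lemma sum_incDegree (I : E → Finset V) (U : Finset V) :
    ∑ v ∈ U, incDegree I v = ∑ e, #(I e ∩ U) := by
  simp only [incDegree, card_filter]
  rw [sum_comm]
  refine sum_congr rfl fun e _ => ?_
  rw [← card_filter, inter_comm, filter_mem_eq_inter]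

lemma card_incPlus (I : E → Finset V) (U : Finset V) :
    #(incPlus I U) = ∑ e, min 1 #(I e ∩ U) := by
  rw [incPlus, card_filter]
  refine sum_congr rfl fun e _ => ?_
  by_cases h : Disjoint (I e) U
  · simp [h, disjoint_iff_inter_eq_empty.mp h]
  · have : 0 < #(I e ∩ U) := by
      rw [card_pos, nonempty_iff_ne_empty]
      exact fun h' => h (disjoint_iff_inter_eq_empty.mpr h')
    simp only [h, not_false_eq_true, if_true]
    omega

lemma card_incPlus_sdiff_add_le {I : E → Finset V} (hI : ∀ e, #(I e) ≤ 2) (U T : Finset V) :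
    #(incPlus I (U \ T)) + #(incPlus I (T \ U)) + ∑ v ∈ U ∩ T, incDegree I v ≤
      #(incPlus I U) + #(incPlus I T) := by
  simp only [card_incPlus, sum_incDegree, ← sum_add_distrib]
  refine sum_le_sum fun e _ => ?_
  have hU : #(I e ∩ U) = #(I e ∩ (U \ T)) + #(I e ∩ (U ∩ T)) := by
    rw [← card_union_of_disjoint (by grind [Finset.disjoint_left])]
    congr 1; grind
  have hT : #(I e ∩ T) = #(I e ∩ (T \ U)) + #(I e ∩ (U ∩ T)) := by
    rw [← card_union_of_disjoint (by grind [Finset.disjoint_left])]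
    congr 1; grind
  have hle : #(I e ∩ (U \ T)) + #(I e ∩ T) ≤ 2 := by
    rw [← card_union_of_disjoint (by grind [Finset.disjoint_left])]
    exact (card_le_card (by grind)).trans (hI e)
  omega

lemma IsTightSet.inter {k : ℕ} {I : E → Finset V} (hI : ∀ e, #(I e) ≤ 2)
    (hk : IsCoverDense k I) {v : V} (hv : k + 2 ≤ incDegree I v) {U T : Finset V}
    (hU : IsTightSet k I U) (hT : IsTightSet k I T) (hvU : v ∈ U) (hvT : v ∈ T) :
    IsTightSet k I (U ∩ T) := by
  have hcard := card_union_add_card_inter U T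
  rcases Nat.even_or_odd #(U ∩ T) with h | h
  · exfalso
    have hUT := card_sdiff_add_card_inter U T
    have hTU := card_sdiff_add_card_inter T U
    rw [inter_comm] at hTU
    have h1 := hk (U \ T) (by have := hU.1; grind)
    have h2 := hk (T \ U) (by have := hT.1; grind)
    have h3 := card_incPlus_sdiff_add_le hI U T
    have h4 : k * #(U ∩ T) < ∑ w ∈ U ∩ T, incDegree I w := by
      rw [mul_comm, ← smul_eq_mul, ← sum_const]
      refine sum_lt_sum (fun w _ => ?_) ⟨v, by simp [hvU, hvT], by omega⟩
      have := hk {w} (by simp)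
      rw [incPlus_singleton, card_singleton] at this
      omega
    have h5 := hU.2
    have h6 := hT.2
    rw [← hUT] at h5
    rw [← hTU] at h6
    nlinarith
  · refine ⟨h, ?_⟩
    have h1 := hk _ h
    have h2 := hk (U ∪ T) (by have := hU.1; have := hT.1; grind)
    have h3 := card_incPlus_inter_add_card_incPlus_union_le I U T
    have h4 := hU.2
    have h5 := hT.2
    have h6 : k * (#(U ∪ T) + 1) + k * (#(U ∩ T) + 1) = k * (#U + 1) + k * (#T + 1) := by
      rw [← mul_add, ← mul_add]; congr 1; omega
    omega

/-- A tight set through a vertex `v` of large degree contains a neighbour of `v`. -/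
lemma IsTightSet.exists_neighbor {k : ℕ} {I : E → Finset V}
    (hk : IsCoverDense k I) {v : V} (hv : k + 2 ≤ incDegree I v) {T : Finset V}
    (hT : IsTightSet k I T) (hvT : v ∈ T) :
    ∃ e, v ∈ I e ∧ ∃ w ∈ T, w ≠ v ∧ w ∈ I e := by
  classical
  by_contra! hno
  have hne : ∃ x ∈ T, x ≠ v := by
    by_contra! h
    obtain rfl : T = {v} := by ext x; simp; grind
    have := hT.2
    rw [incPlus_singleton, card_singleton] at this
    omega
  obtain ⟨x, hxT, hxv⟩ := hne
  have hc : #((T.erase v).erase x) + 2 = #T := by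
    rw [← card_erase_add_one hvT, ← card_erase_add_one (mem_erase.mpr ⟨hxv, hxT⟩)]
  have h1 := hk ((T.erase v).erase x) (by have := hT.1; grind)
  have h2 : #(incPlus I ((T.erase v).erase x)) + incDegree I v ≤ #(incPlus I T) := by
    rw [incDegree, ← card_union_of_disjoint]
    · refine card_le_card fun e => ?_
      simp only [incPlus, mem_union, mem_filter, mem_univ, true_and, not_disjoint_iff]
      grind
    · rw [Finset.disjoint_left]
      intro e
      simp only [incPlus, mem_filter, mem_univ, true_and, not_disjoint_iff]
      grind
  have h3 := hT.2
  rw [← hc] at h3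
  nlinarith

/-- At a vertex of degree at least `k + 2` some edge can be detached preserving
`IsCoverDense`. -/
lemma IsCoverDense.exists_detach [DecidableEq E] {k : ℕ} {I : E → Finset V}
    (hI : ∀ e, #(I e) ≤ 2) (hk : IsCoverDense k I) {v : V} (hv : k + 2 ≤ incDegree I v) :
    ∃ e, v ∈ I e ∧ IsCoverDense k (Function.update I e ((I e).erase v)) := by
  have key : ∃ e, v ∈ I e ∧ ∀ U, IsTightSet k I U → v ∈ U → ∃ w ∈ U, w ≠ v ∧ w ∈ I e := by
    by_cases hT : ∃ T, IsTightSet k I T ∧ v ∈ T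
    · obtain ⟨T, ⟨hT, hvT⟩, hmin⟩ :=
        exists_min_image ({T | IsTightSet k I T ∧ v ∈ T} : Set (Finset V)).toFinite.toFinset
          card (by simpa [Finset.Nonempty] using hT) |>.imp fun T h => by simpa using h
      obtain ⟨e, he, w, hwT, hwv, hwe⟩ := hT.exists_neighbor hk hv hvT
      refine ⟨e, he, fun U hU hvU => ⟨w, ?_, hwv, hwe⟩⟩
      have hle := hmin (U ∩ T) (hU.inter hI hk hv hT hvU hvT) (by simp [hvU, hvT])
      have := eq_of_subset_of_card_le inter_subset_right hle
      exact (mem_inter.mp (this ▸ hwT)).1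
    · have : 0 < incDegree I v := by omega
      obtain ⟨e, he⟩ := card_pos.mp this
      exact ⟨e, by simpa using he, fun U hU hvU => absurd ⟨U, hU, hvU⟩ hT⟩
  obtain ⟨e, he, hw⟩ := key
  refine ⟨e, he, fun U hU => ?_⟩
  have hkU := hk U hU
  by_cases h : incPlus I U ⊆ incPlus (Function.update I e ((I e).erase v)) U
  · have := card_le_card h
    omega
  have hsub : (incPlus I U).erase e ⊆ incPlus (Function.update I e ((I e).erase v)) U := by
    intro f
    simp only [incPlus, mem_erase, mem_filter, mem_univ, true_and]
    rintro ⟨hf, h⟩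
    rwa [Function.update_of_ne hf]
  have hloss : ∀ w ∈ U, w ≠ v → w ∉ I e := by
    intro w hwU hwv hwe
    refine h fun f hf => ?_
    by_cases hfe : f = e
    · subst hfe
      simp only [incPlus, mem_filter, mem_univ, true_and, not_disjoint_iff,
        Function.update_self]
      exact ⟨w, mem_erase.mpr ⟨hwv, hwe⟩, hwU⟩
    · exact hsub (mem_erase.mpr ⟨hfe, hf⟩)
  have hvU : v ∈ U := by
    by_contra hvU
    refine h fun f hf => ?_
    by_cases hfe : f = e
    · subst hfe
      simp only [incPlus, mem_filter, mem_univ, true_and, not_disjoint_iff] at hf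
      obtain ⟨w, hwe, hwU⟩ := hf
      exact absurd hwe (hloss w hwU fun h => hvU (h ▸ hwU))
    · exact hsub (mem_erase.mpr ⟨hfe, hf⟩)
  have hnt : ¬ IsTightSet k I U := by
    intro ht
    obtain ⟨w, hwU, hwv, hwe⟩ := hw U ht hvU
    exact hloss w hwU hwv hwe
  have h1 := card_le_card hsub
  have h2 := pred_card_le_card_erase (s := incPlus I U) (a := e)
  have h3 : 2 * #(incPlus I U) ≠ k * (#U + 1) + 2 := fun h => hnt ⟨hU, h⟩
  obtain ⟨m, hm⟩ := hU
  rw [hm] at hkU h3 ⊢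
  have h4 : k * (2 * m + 1 + 1) = 2 * (k * (m + 1)) := by ring
  omega

/-- Detaching edges one at a time makes all degrees equal to `k + 1`. -/
lemma IsCoverDense.exists_regular {k : ℕ} (I : E → Finset V) (hI : ∀ e, #(I e) ≤ 2)
    (hk : IsCoverDense k I) :
    ∃ J : E → Finset V, (∀ e, J e ⊆ I e) ∧ IsCoverDense k J ∧ ∀ v, incDegree J v = k + 1 := by
  classical
  induction hn : ∑ e, #(I e) using Nat.strong_induction_on generalizing I with
  | _ n ih =>
    by_cases h : ∃ v, k + 2 ≤ incDegree I v
    · obtain ⟨v, hv⟩ := h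
      obtain ⟨e, he, hk'⟩ := hk.exists_detach hI hv
      have hsub : ∀ f, Function.update I e ((I e).erase v) f ⊆ I f := by
        intro f
        by_cases hfe : f = e
        · subst hfe; simpa using erase_subset v (I f)
        · rw [Function.update_of_ne hfe]
      obtain ⟨J, hJ, hJk, hJd⟩ := ih _ (by
        rw [← hn]
        refine sum_lt_sum (fun f _ => card_le_card (hsub f)) ⟨e, mem_univ e, ?_⟩
        rw [Function.update_self]
        exact card_erase_lt_of_mem he) _
        (fun f => (card_le_card (hsub f)).trans (hI f)) hk' rfl
      exact ⟨J, fun f => (hJ f).trans (hsub f), hJk, hJd⟩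
    · push Not at h
      refine ⟨I, fun _ => Subset.rfl, hk, fun v => ?_⟩
      have h1 := h v
      have h2 := hk {v} (by simp)
      rw [incPlus_singleton, card_singleton] at h2
      omega

/-! ### From a proper coloring to a cover coloring -/

/-- If every vertex misses exactly one of `k + 2` colors, recoloring the edges of the last two
colors produces a cover coloring with `k` colors. -/
lemma exists_cover_of_proper {k : ℕ} (hk : 0 < k) {I : E → Finset V} (hI : ∀ e, #(I e) ≤ 2)
    (c : E → Fin (k + 2))
    (hc : ∀ v, ∀ e f, v ∈ I e → v ∈ I f → c e = c f → e = f)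
    (hd : ∀ v, incDegree I v = k + 1) :
    ∃ c' : E → Fin k, ∀ v i, ∃ e, v ∈ I e ∧ c' e = i := by
  classical
  let seen : V → Finset (Fin (k + 2)) := fun v => ({e | v ∈ I e} : Finset E).image c
  have hseen : ∀ v, #(seen v) = k + 1 := by
    intro v
    rw [card_image_of_injOn, ← hd v, incDegree]
    intro e he f hf
    simp only [coe_filter, mem_univ, true_and, Set.mem_ofPred_eq] at he hf
    exact hc v e f he hf
  have hmiss : ∀ v, ∃ m, ∀ i, i ∈ seen v ↔ i ≠ m := by
    intro v
    have : #(seen v)ᶜ = 1 := by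
      rw [card_compl, hseen, Fintype.card_fin]; omega
    obtain ⟨m, hm⟩ := card_eq_one.mp this
    exact ⟨m, fun i => by rw [← not_iff_not, ← mem_compl, hm]; simp⟩
  choose m hm using hmiss
  have hsee : ∀ v i, i ≠ m v → ∃ e, v ∈ I e ∧ c e = i := by
    intro v i hi
    simpa [seen] using (hm v i).mpr hi
  let t : {v // (m v : ℕ) < k} → Finset E := fun v => {e | v.1 ∈ I e ∧ k ≤ (c e : ℕ)}
  have ht : ∀ v, 2 ≤ #(t v) := by
    rintro ⟨v, hv⟩
    obtain ⟨e, he, hce⟩ := hsee v ⟨k, by omega⟩ (by rintro h; rw [← h] at hv; simp at hv)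
    obtain ⟨f, hf, hcf⟩ := hsee v ⟨k + 1, by omega⟩ (by rintro h; rw [← h] at hv; simp at hv)
    refine one_lt_card.mpr ⟨e, by simp [t, he, hce], f, by simp [t, hf, hcf], ?_⟩
    rintro rfl
    simp [hce] at hcf
  have hall : ∀ s : Finset {v // (m v : ℕ) < k}, #s ≤ #(s.biUnion t) := by
    intro s
    have h := sum_card_bipartiteAbove_eq_sum_card_bipartiteBelow (s := s) (t := s.biUnion t)
      (fun v e => e ∈ t v)
    have h1 : #s * 2 ≤ ∑ v ∈ s, #(bipartiteAbove (fun v e => e ∈ t v) (s.biUnion t) v) := by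
      rw [← smul_eq_mul]
      refine card_nsmul_le_sum _ _ _ fun v hv => (ht v).trans (card_le_card fun e he => ?_)
      exact mem_filter.mpr ⟨mem_biUnion.mpr ⟨v, hv, he⟩, he⟩
    have h2 : ∑ e ∈ s.biUnion t, #(bipartiteBelow (fun v e => e ∈ t v) s e) ≤
        #(s.biUnion t) * 2 := by
      rw [← smul_eq_mul]
      refine sum_le_card_nsmul _ _ _ fun e _ => le_trans ?_ (hI e)
      refine card_le_card_of_injOn Subtype.val (fun v hv => ?_) Subtype.val_injective.injOn
      simp only [bipartiteBelow, coe_filter, Set.mem_ofPred_eq, t, mem_filter] at hv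
      exact hv.2.2.1
    omega
  obtain ⟨g, hg, hgt⟩ := (all_card_le_biUnion_card_iff_exists_injective t).mp hall
  refine ⟨fun e => if h : (c e : ℕ) < k then ⟨c e, h⟩ else
    if h' : ∃ v, g v = e then ⟨m h'.choose.1, h'.choose.2⟩ else ⟨0, hk⟩, fun v i => ?_⟩
  by_cases hi : (i.castLE (by omega) : Fin (k + 2)) = m v
  · have hlt : (m v : ℕ) < k := by rw [← hi]; exact i.2
    have hmem := hgt ⟨v, hlt⟩
    simp only [t, mem_filter, mem_univ, true_and] at hmem
    have hex : ∃ w, g w = g ⟨v, hlt⟩ := ⟨_, rfl⟩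
    refine ⟨g ⟨v, hlt⟩, hmem.1, ?_⟩
    simp only
    rw [dif_neg (by omega), dif_pos hex]
    have := hg hex.choose_spec
    ext
    simp only [this, ← hi, Fin.val_castLE]
  · obtain ⟨e, he, hce⟩ := hsee v _ hi
    refine ⟨e, he, ?_⟩
    have : (c e : ℕ) = i := by rw [hce, Fin.val_castLE]
    simp only
    rw [dif_pos (by omega)]
    exact Fin.ext this

/-! ### The multigraph with detached ends -/

/-- The multigraph in which every end of an edge `e` not in `I e` is replaced by a new vertex. -/
def detachedEnds (ends : E → Sym2 V) (I : E → Finset V) (e : E) : Sym2 (V ⊕ E × V) :=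
  (ends e).map fun v => if v ∈ I e then Sum.inl v else Sum.inr (e, v)

lemma loopless_detachedEnds {ends : E → Sym2 V} (hG : Loopless ends) (I : E → Finset V) :
    Loopless (detachedEnds ends I) := by
  intro e
  rw [detachedEnds, Sym2.isDiag_map]
  · exact hG e
  · intro v w h
    grind

lemma inl_mem_detachedEnds {ends : E → Sym2 V} {I : E → Finset V}
    (hI : ∀ e, ∀ v ∈ I e, v ∈ ends e) (e : E) (v : V) :
    Sum.inl v ∈ detachedEnds ends I e ↔ v ∈ I e := by
  rw [detachedEnds, Sym2.mem_map]
  constructor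
  · rintro ⟨w, _, h⟩
    grind
  · exact fun h => ⟨v, hI e v h, by simp [h]⟩

lemma eq_of_inr_mem_detachedEnds {ends : E → Sym2 V} {I : E → Finset V} {e : E} {p : E × V}
    (h : Sum.inr p ∈ detachedEnds ends I e) : e = p.1 := by
  rw [detachedEnds, Sym2.mem_map] at h
  grind

lemma mDegree_detachedEnds_inl [DecidableEq E] {ends : E → Sym2 V} {I : E → Finset V}
    (hI : ∀ e, ∀ v ∈ I e, v ∈ ends e) (v : V) :
    mDegree (detachedEnds ends I) (Sum.inl v) = incDegree I v := by
  simp only [mDegree, incDegree, inl_mem_detachedEnds hI]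

lemma mDegree_detachedEnds_inr_le [DecidableEq E] (ends : E → Sym2 V) (I : E → Finset V)
    (p : E × V) : mDegree (detachedEnds ends I) (Sum.inr p) ≤ 1 := by
  rw [mDegree, card_le_one]
  intro e he f hf
  simp only [mem_filter, mem_univ, true_and] at he hf
  rw [eq_of_inr_mem_detachedEnds he, eq_of_inr_mem_detachedEnds hf]

lemma card_edgesIn_add_card_edgesPlus {ends : E → Sym2 V} (hG : Loopless ends) (U : Finset V) :
    #(edgesIn ends U) + #(edgesPlus ends U) = ∑ v ∈ U, mDegree ends v := by
  simp only [edgesIn, edgesPlus, mDegree, card_filter]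
  rw [sum_comm, ← sum_add_distrib]
  refine sum_congr rfl fun e _ => ?_
  have he := hG e
  rw [← card_filter]
  revert he
  induction ends e with
  | _ a b =>
    intro hab
    rw [Sym2.mk_isDiag_iff] at hab
    have : ({v ∈ U | v ∈ s(a, b)} : Finset V) =
        (if a ∈ U then {a} else ∅) ∪ (if b ∈ U then {b} else ∅) := by
      ext v; simp only [Sym2.mem_iff]; grind
    rw [this]
    by_cases ha : a ∈ U <;> by_cases hb : b ∈ U <;> simp [ha, hb, card_pair hab]

lemma card_edgesIn_le_card_edgesPlus (ends : E → Sym2 V) (U : Finset V) :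
    #(edgesIn ends U) ≤ #(edgesPlus ends U) := by
  refine card_le_card fun e => ?_
  simp only [edgesIn, edgesPlus, mem_filter, mem_univ, true_and]
  exact fun h => ⟨_, Sym2.out_fst_mem _, h _ (Sym2.out_fst_mem _)⟩

lemma density_detachedEnds_le [DecidableEq E] {ends : E → Sym2 V} (hG : Loopless ends)
    {I : E → Finset V} (hI : ∀ e, ∀ v ∈ I e, v ∈ ends e) {k : ℕ} (hk : IsCoverDense k I)
    (hd : ∀ v, incDegree I v = k + 1) : density (detachedEnds ends I) ≤ (k + 2 : ℕ) := by
  refine Real.sSup_le ?_ (Nat.cast_nonneg _)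
  rintro _ ⟨U, ⟨hU3, hU⟩, rfl⟩
  have hU3' : (3 : ℝ) ≤ #U := by exact_mod_cast hU3
  rw [div_le_iff₀ (by linarith)]
  suffices h : 2 * #(edgesIn (detachedEnds ends I) U) + (k + 2) ≤ (k + 2) * #U by
    have : (2 * #(edgesIn (detachedEnds ends I) U) + (k + 2) : ℝ) ≤ (k + 2) * #U := by
      exact_mod_cast h
    push_cast
    linarith
  have hsum : ∑ w ∈ U, mDegree (detachedEnds ends I) w ≤ (k + 1) * #U.toLeft + #U.toRight := by
    rw [← toLeft_disjSum_toRight (u := U), sum_disjSum, toLeft_disjSum, toRight_disjSum]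
    refine add_le_add (le_of_eq ?_) ?_
    · simp only [mDegree_detachedEnds_inl hI, hd, sum_const, smul_eq_mul, mul_comm]
    · simpa using sum_le_card_nsmul U.toRight _ 1
        fun p _ => mDegree_detachedEnds_inr_le ends I p
  have hadd := card_edgesIn_add_card_edgesPlus (loopless_detachedEnds hG I) U
  have hcard := card_toLeft_add_card_toRight (u := U)
  rw [← hcard] at hU3 hU ⊢
  rcases Nat.even_or_odd #U.toLeft with h | h
  · have hle := card_edgesIn_le_card_edgesPlus (detachedEnds ends I) U
    have hR : Odd #U.toRight := by grind
    have hR1 := hR.pos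
    have : k + 2 ≤ #U.toLeft + (k + 1) * #U.toRight := by
      rcases Nat.eq_zero_or_pos #U.toLeft with h0 | h0
      · rw [h0, zero_add] at hU3 ⊢
        nlinarith
      · nlinarith
    nlinarith
  · have hplus : #(incPlus I U.toLeft) ≤ #(edgesPlus (detachedEnds ends I) U) := by
      refine card_le_card fun e => ?_
      simp only [incPlus, edgesPlus, mem_filter, mem_univ, true_and, not_disjoint_iff]
      rintro ⟨v, hv, hvU⟩
      exact ⟨Sum.inl v, (inl_mem_detachedEnds hI e v).mpr hv, mem_toLeft.mp hvU⟩
    have := hk _ h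
    nlinarith

lemma exists_proper_of_chromaticIndex_le (ends : E → Sym2 V) {n : ℕ}
    (h : chromaticIndex ends ≤ n) : ∃ c : E → Fin n, IsProperEdgeColoring ends c := by
  have hne : {k : ℕ | ∃ c : E → Fin k, IsProperEdgeColoring ends c}.Nonempty :=
    ⟨_, Fintype.equivFin E, fun _ _ _ _ _ h => (Fintype.equivFin E).injective h⟩
  obtain ⟨c, hc⟩ := Nat.sInf_mem hne
  exact ⟨fun e => (c e).castLE h, fun v e f he hf hef =>
    hc v e f he hf (Fin.castLE_injective h hef)⟩

lemma le_coverIndex [Nonempty V] (ends : E → Sym2 V) {k : ℕ} (c : E → Fin k)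
    (hc : IsCoverColoring ends c) : k ≤ coverIndex ends := by
  refine le_csSup ⟨Fintype.card E, ?_⟩ ⟨c, hc⟩
  rintro n ⟨d, hd⟩
  have hsurj : Function.Surjective d := fun i =>
    (hd (Classical.arbitrary V) i).imp fun _ h => h.2
  simpa using Fintype.card_le_of_surjective d hsurj

/-- The Goldberg–Seymour bound yields a cover coloring with `k` colors as soon as
`δ(G) > k` and `Φ(G) > k`. -/
lemma le_coverIndex_of_lt
    (GS : ∀ (W F : Type) [Fintype W] [DecidableEq W] [Fintype F]
      (ends' : F → Sym2 W), Loopless ends' →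
      (chromaticIndex ends' : ℤ) ≤ max ((maxDegree ends' : ℤ) + 1) ⌈density ends'⌉)
    (ends : E → Sym2 V) (hG : Loopless ends) {k : ℕ}
    (hδ : k < minDegree ends) (hΦ : (k : ℝ) < codensity ends) : k ≤ coverIndex ends := by
  classical
  rcases Nat.eq_zero_or_pos k with rfl | hk0
  · exact Nat.zero_le _
  have hV : Nonempty V := by
    by_contra hV
    rw [not_nonempty_iff] at hV
    simp [minDegree, Set.range_eq_empty] at hδ
  have hdense : IsCoverDense k fun e => (ends e).toFinset := by
    intro U hU
    have hplus : incPlus (fun e => (ends e).toFinset) U = edgesPlus ends U := by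
      ext e
      simp [incPlus, edgesPlus, not_disjoint_iff]
    by_cases h3 : 3 ≤ #U
    · rw [hplus]
      have hle : codensity ends ≤ 2 * #(edgesPlus ends U) / ((#U : ℝ) + 1) := by
        refine csInf_le ⟨0, ?_⟩ ⟨U, ⟨h3, hU⟩, rfl⟩
        rintro _ ⟨T, _, rfl⟩
        positivity
      have hlt := hΦ.trans_le hle
      rw [lt_div_iff₀ (by positivity)] at hlt
      have hlt' : k * (#U + 1) < 2 * #(edgesPlus ends U) := by exact_mod_cast hlt
      obtain ⟨m, hm⟩ := hU
      rw [hm] at hlt' ⊢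
      have h4 : k * (2 * m + 1 + 1) = 2 * (k * (m + 1)) := by ring
      omega
    · have h1 : #U = 1 := by grind
      obtain ⟨v, rfl⟩ := card_eq_one.mp h1
      have hv : minDegree ends ≤ mDegree ends v := Nat.sInf_le ⟨v, rfl⟩
      have hvd : incDegree (fun e => (ends e).toFinset) v = mDegree ends v := by
        simp [incDegree, mDegree]
      rw [incPlus_singleton, hvd, card_singleton]
      omega
  have htwo : ∀ e, #(ends e).toFinset ≤ 2 := fun e =>
    (Sym2.card_toFinset_of_not_isDiag _ (hG e)).le
  obtain ⟨J, hJ, hJk, hJd⟩ := hdense.exists_regular _ htwo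
  have hJe : ∀ e, ∀ v ∈ J e, v ∈ ends e := fun e v hv => by simpa using hJ e hv
  have hχ : chromaticIndex (detachedEnds ends J) ≤ k + 2 := by
    have h := GS _ _ _ (loopless_detachedEnds hG J)
    have hΔ : maxDegree (detachedEnds ends J) ≤ k + 1 := by
      refine csSup_le' ?_
      rintro _ ⟨v | p, rfl⟩
      · rw [mDegree_detachedEnds_inl hJe, hJd]
      · exact (mDegree_detachedEnds_inr_le ends J p).trans (by omega)
    have hΓ : ⌈density (detachedEnds ends J)⌉ ≤ ((k + 2 : ℕ) : ℤ) :=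
      Int.ceil_le.mpr (by exact_mod_cast density_detachedEnds_le hG hJe hJk hJd)
    have := h.trans (max_le (by push_cast; omega) hΓ)
    exact_mod_cast this
  obtain ⟨c, hc⟩ := exists_proper_of_chromaticIndex_le _ hχ
  obtain ⟨c', hc'⟩ := exists_cover_of_proper hk0
    (fun e => (card_le_card (hJ e)).trans (htwo e)) c
    (fun v e f he hf => hc (Sum.inl v) e f ((inl_mem_detachedEnds hJe e v).mpr he)
      ((inl_mem_detachedEnds hJe f v).mpr hf)) hJd
  exact le_coverIndex ends c' fun v i =>
    (hc' v i).imp fun e he => ⟨hJe e v he.1, he.2⟩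

/-- Assuming the Goldberg–Seymour conjecture, every finite loopless multigraph `G`
satisfies `ξ(G) ≥ min{δ(G)−1, ⌊Φ(G)⌋}` if `Φ(G)` is not an integer, and
`ξ(G) ≥ min{δ(G)−2, ⌊Φ(G)⌋−1}` if `Φ(G)` is an integer. -/
theorem stmt_0
    (GS : ∀ (W F : Type) [Fintype W] [DecidableEq W] [Fintype F]
      (ends' : F → Sym2 W), Loopless ends' →
      (chromaticIndex ends' : ℤ) ≤ max ((maxDegree ends' : ℤ) + 1) ⌈density ends'⌉)
    {V E : Type} [Fintype V] [DecidableEq V] [Fintype E]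
    (ends : E → Sym2 V) (hG : Loopless ends) :
    (¬ (∃ n : ℤ, codensity ends = (n : ℝ)) →
      min ((minDegree ends : ℤ) - 1) ⌊codensity ends⌋ ≤ (coverIndex ends : ℤ)) ∧
    ((∃ n : ℤ, codensity ends = (n : ℝ)) →
      min ((minDegree ends : ℤ) - 2) (⌊codensity ends⌋ - 1) ≤ (coverIndex ends : ℤ)) := by
  have key : ∀ z : ℤ, z < minDegree ends → (z : ℝ) < codensity ends →
      z ≤ (coverIndex ends : ℤ) := by
    intro z hδ hΦ
    rcases lt_or_ge z 0 with hz | hz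
    · omega
    · lift z to ℕ using hz
      exact_mod_cast le_coverIndex_of_lt GS ends hG (by exact_mod_cast hδ)
        (by exact_mod_cast hΦ)
  constructor
  · intro hΦ
    refine key _ (by omega) ?_
    refine lt_of_le_of_ne ?_ fun h => hΦ ⟨_, h.symm⟩
    exact le_trans (by exact_mod_cast min_le_right _ _) (Int.floor_le _)
  · rintro -
    refine key _ (by omega) ?_
    have h : ((min ((minDegree ends : ℤ) - 2) (⌊codensity ends⌋ - 1) : ℤ) : ℝ) ≤
        (⌊codensity ends⌋ - 1 : ℤ) := Int.cast_le.mpr (min_le_right _ _)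
    push_cast at h ⊢
    linarith [Int.floor_le (codensity ends)]
end

section
/- Assume the Goldberg–Seymour conjecture holds, i.e., every finite loopless multigraph H satisfies χ'(H) ≤ max{Δ(H)+1, ⌈Γ(H)⌉}. Let G=(V,E) be a finite loopless multigraph, let Z ⊆ V, let k be a positive integer, and let ε ∈ {0,1}. If every vertex z ∈ Z has degree d(z) ≥ k+1 and |E⁺(U)| ≥ ((|U|+1)/2)·k + ε for every odd set U ⊆ Z, then G contains k−1+ε pairwise disjoint Z-covers. -/
open Finset

variable {V E : Type} [Fintype V] [DecidableEq V] [Fintype E]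

/-- The number of hyperedges `D e` meeting `U`. -/
def meetCount {W F : Type} [DecidableEq W] [Fintype F] (D : F → Finset W) (U : Finset W) : ℕ :=
  ∑ e, if Disjoint (D e) U then 0 else 1

/-- The number of hyperedges `D e` containing `v`. -/
def incCount {W F : Type} [DecidableEq W] [Fintype F] (D : F → Finset W) (v : W) : ℕ :=
  ∑ e, if v ∈ D e then 1 else 0

section Hyperedges

variable {W F : Type} [DecidableEq W] [Fintype F] {D : F → Finset W} {k : ℕ}

lemma meetCount_singleton (D : F → Finset W) (v : W) : meetCount D {v} = incCount D v := by
  unfold meetCount incCount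
  refine sum_congr rfl fun e _ => ?_
  by_cases h : v ∈ D e <;> simp [h]

lemma sum_incCount (D : F → Finset W) (U : Finset W) :
    ∑ v ∈ U, incCount D v = ∑ e, (D e ∩ U).card := by
  unfold incCount
  rw [sum_comm]
  refine sum_congr rfl fun e _ => ?_
  rw [← card_filter, inter_comm, filter_mem_eq_inter]

lemma meetCount_mono {A B : Finset W} (h : A ⊆ B) : meetCount D A ≤ meetCount D B := by
  refine sum_le_sum fun e _ => ?_
  by_cases hB : Disjoint (D e) B
  · simp [hB, hB.mono_right h]
  · simp only [hB, if_false]; split_ifs <;> simp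

lemma meetCount_submodular (A B : Finset W) :
    meetCount D (A ∪ B) + meetCount D (A ∩ B) ≤ meetCount D A + meetCount D B := by
  unfold meetCount
  rw [← sum_add_distrib, ← sum_add_distrib]
  refine sum_le_sum fun e _ => ?_
  by_cases hA : Disjoint (D e) A
  · have h := hA.mono_right (inter_subset_left (s₂ := B))
    by_cases hB : Disjoint (D e) B <;> simp [hA, hB, h]
  · by_cases hB : Disjoint (D e) B
    · have h := hB.mono_right (inter_subset_right (s₁ := A))
      simp [hA, hB, h]
    · simp only [hA, hB, if_false]
      split_ifs <;> simp

lemma meetCount_sdiff_add_le (hD : ∀ e, (D e).card ≤ 2) (A B : Finset W) :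
    meetCount D (A \ B) + meetCount D (B \ A) + ∑ v ∈ A ∩ B, incCount D v
      ≤ meetCount D A + meetCount D B := by
  rw [sum_incCount]
  unfold meetCount
  rw [← sum_add_distrib, ← sum_add_distrib, ← sum_add_distrib]
  refine sum_le_sum fun e _ => ?_
  have ind : ∀ U : Finset W, (if Disjoint (D e) U then 0 else 1) ≤ (D e ∩ U).card := by
    intro U
    split_ifs with hU
    · simp
    · exact card_pos.2 (not_disjoint_iff_nonempty_inter.1 hU)
  have mono : ∀ {U U' : Finset W}, U ⊆ U' →
      (if Disjoint (D e) U then 0 else 1) ≤ if Disjoint (D e) U' then 0 else 1 := by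
    intro U U' h
    by_cases hB : Disjoint (D e) U'
    · simp [hB, hB.mono_right h]
    · simp only [hB, if_false]; split_ifs <;> simp
  rcases (D e ∩ (A ∩ B)).eq_empty_or_nonempty with h0 | ⟨x, hx⟩
  · rw [h0, card_empty, add_zero]
    exact add_le_add (mono sdiff_subset) (mono sdiff_subset)
  · simp only [mem_inter] at hx
    have hA : ¬ Disjoint (D e) A := not_disjoint_iff.2 ⟨x, hx.1, hx.2.1⟩
    have hB : ¬ Disjoint (D e) B := not_disjoint_iff.2 ⟨x, hx.1, hx.2.2⟩
    have h1 := ind (A \ B)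
    have h2 := ind (B \ A)
    have h3 : (D e ∩ (A \ B)).card + (D e ∩ (B \ A)).card + (D e ∩ (A ∩ B)).card
        ≤ (D e).card := by
      rw [← card_union_of_disjoint, ← card_union_of_disjoint]
      · exact card_le_card (by grind)
      · rw [disjoint_left]; grind
      · rw [disjoint_left]; grind
    have h4 := hD e
    rw [if_neg hA, if_neg hB]
    omega

lemma tight_inter (hD : ∀ e, (D e).card ≤ 2)
    (hP : ∀ U : Finset W, Odd U.card → (U.card + 1) / 2 * k + 1 ≤ meetCount D U)
    {A B : Finset W} {z : W} (hzA : z ∈ A) (hzB : z ∈ B) (hA : Odd A.card) (hB : Odd B.card)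
    (tA : meetCount D A = (A.card + 1) / 2 * k + 1)
    (tB : meetCount D B = (B.card + 1) / 2 * k + 1) :
    Odd (A ∩ B).card ∧ meetCount D (A ∩ B) = ((A ∩ B).card + 1) / 2 * k + 1 := by
  have cA := card_sdiff_add_card_inter A B
  have cB := card_sdiff_add_card_inter B A
  rw [inter_comm B A] at cB
  have hpos : 0 < (A ∩ B).card := card_pos.2 ⟨z, mem_inter.2 ⟨hzA, hzB⟩⟩
  rcases Nat.even_or_odd (A ∩ B).card with hI | hI
  · exfalso
    have oX : Odd (A \ B).card := by grind
    have oY : Odd (B \ A).card := by grind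
    have h := meetCount_sdiff_add_le hD A B
    have hX := hP _ oX
    have hY := hP _ oY
    have hS : (A ∩ B).card * (k + 1) ≤ ∑ v ∈ A ∩ B, incCount D v := by
      rw [← smul_eq_mul]
      refine card_nsmul_le_sum _ _ _ fun v _ => ?_
      have := hP {v} (by simp)
      rw [meetCount_singleton] at this
      simpa using this
    obtain ⟨i, hi⟩ := hI
    obtain ⟨x, hx⟩ := oX
    obtain ⟨y, hy⟩ := oY
    have e1 : (A.card + 1) / 2 = x + i + 1 := by omega
    have e2 : (B.card + 1) / 2 = y + i + 1 := by omega
    have e3 : ((A \ B).card + 1) / 2 = x + 1 := by omega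
    have e4 : ((B \ A).card + 1) / 2 = y + 1 := by omega
    rw [tA, tB, e1, e2] at h
    rw [e3] at hX
    rw [e4] at hY
    rw [hi] at hS hpos
    nlinarith
  · refine ⟨hI, le_antisymm ?_ (hP _ hI)⟩
    have cU := card_union_add_card_inter A B
    have oU : Odd (A ∪ B).card := by grind
    have h := meetCount_submodular (D := D) A B
    have hU := hP _ oU
    obtain ⟨i, hi⟩ := hI
    obtain ⟨x, hx⟩ := hA
    obtain ⟨y, hy⟩ := hB
    have e1 : (A.card + 1) / 2 = x + 1 := by omega
    have e2 : (B.card + 1) / 2 = y + 1 := by omega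
    have e3 : ((A ∩ B).card + 1) / 2 = i + 1 := by omega
    obtain ⟨u, hu⟩ := oU
    have e4 : ((A ∪ B).card + 1) / 2 = u + 1 := by omega
    have e5 : u + i = x + y := by omega
    rw [tA, tB, e1, e2] at h
    rw [e4] at hU
    rw [e3]
    have : u * k + i * k = x * k + y * k := by rw [← add_mul, e5, add_mul]
    nlinarith

/-- If `z` has degree larger than `k + 1`, some edge at `z` meets every tight odd set
through `z` outside of `z`. -/
lemma exists_detachable [Fintype W] (hD : ∀ e, (D e).card ≤ 2)
    (hP : ∀ U : Finset W, Odd U.card → (U.card + 1) / 2 * k + 1 ≤ meetCount D U)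
    {z : W} (hz : k + 1 < incCount D z) :
    ∃ e, z ∈ D e ∧ ∀ U : Finset W, z ∈ U → Odd U.card →
      meetCount D U = (U.card + 1) / 2 * k + 1 → ¬ Disjoint ((D e).erase z) U := by
  by_cases hT : ∃ U : Finset W, z ∈ U ∧ Odd U.card ∧ meetCount D U = (U.card + 1) / 2 * k + 1
  · obtain ⟨T, hTmem, hTmin⟩ := exists_min_image
      (univ.filter fun U : Finset W => z ∈ U ∧ Odd U.card ∧
        meetCount D U = (U.card + 1) / 2 * k + 1) card (by
          obtain ⟨U, hU⟩ := hT
          exact ⟨U, by simpa using hU⟩)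
    simp only [mem_filter, mem_univ, true_and] at hTmem hTmin
    obtain ⟨hzT, oT, tT⟩ := hTmem
    have hsub : ∀ U : Finset W, z ∈ U → Odd U.card →
        meetCount D U = (U.card + 1) / 2 * k + 1 → T ⊆ U := by
      intro U hzU oU tU
      have h := tight_inter hD hP hzT hzU oT oU tT tU
      have h2 := hTmin (T ∩ U) ⟨mem_inter.2 ⟨hzT, hzU⟩, h⟩
      exact inter_eq_left.1 (eq_of_subset_of_card_le inter_subset_left h2)
    suffices h : ∃ e, z ∈ D e ∧ ¬ Disjoint ((D e).erase z) T by
      obtain ⟨e, he, hd⟩ := h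
      exact ⟨e, he, fun U h1 h2 h3 hdis => hd (hdis.mono_right (hsub U h1 h2 h3))⟩
    by_contra! hno
    have hne : T ≠ {z} := by
      rintro rfl
      rw [meetCount_singleton] at tT
      simp at tT
      omega
    obtain ⟨w, hwT, hwz⟩ : ∃ w ∈ T, w ≠ z := by
      by_contra! h
      exact hne (eq_singleton_iff_unique_mem.2 ⟨hzT, h⟩)
    have hsplit : meetCount D (T.erase z) + incCount D z ≤ meetCount D T := by
      unfold meetCount incCount
      rw [← sum_add_distrib]
      refine sum_le_sum fun e _ => ?_
      by_cases hze : z ∈ D e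
      · have h1 : ¬ Disjoint (D e) T := not_disjoint_iff.2 ⟨z, hze, hzT⟩
        have h2 : Disjoint (D e) (T.erase z) := by
          have := hno e hze
          rw [disjoint_left] at this ⊢
          grind
        simp [hze, h1, h2]
      · by_cases h1 : Disjoint (D e) T
        · simp [hze, h1, h1.mono_right (erase_subset z T)]
        · simp only [hze, h1, if_false]; split_ifs <;> simp
    have hmono : meetCount D ((T.erase z).erase w) ≤ meetCount D (T.erase z) :=
      meetCount_mono (erase_subset _ _)
    have c1 := card_erase_add_one hzT
    have c2 := card_erase_add_one (mem_erase.2 ⟨hwz, hwT⟩)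
    have h3 := hP ((T.erase z).erase w) (by grind)
    have e1 : (T.card + 1) / 2 = (((T.erase z).erase w).card + 1) / 2 + 1 := by omega
    rw [e1, add_mul] at tT
    omega
  · push Not at hT
    have hpos : 0 < incCount D z := by omega
    obtain ⟨e, -, he⟩ := exists_ne_zero_of_sum_ne_zero hpos.ne'
    exact ⟨e, by by_contra h; simp [h] at he, fun U h1 h2 h3 => absurd h3 (hT U h1 h2)⟩

/-- Every system of hyperedges of size at most two with many edges meeting each odd set can be
shrunk to one in which, additionally, all degrees are `k + 1`. -/
lemma exists_regular_shrinking [Fintype W] (D : F → Finset W) (hD : ∀ e, (D e).card ≤ 2)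
    (hP : ∀ U : Finset W, Odd U.card → (U.card + 1) / 2 * k + 1 ≤ meetCount D U) :
    ∃ D' : F → Finset W, (∀ e, D' e ⊆ D e) ∧
      (∀ U : Finset W, Odd U.card → (U.card + 1) / 2 * k + 1 ≤ meetCount D' U) ∧
      ∀ v, incCount D' v = k + 1 := by
  classical
  induction hn : ∑ e, (D e).card using Nat.strong_induction_on generalizing D with
  | _ n ih =>
  by_cases hreg : ∀ v, incCount D v = k + 1
  · exact ⟨D, fun e => Subset.rfl, hP, hreg⟩
  · push Not at hreg
    obtain ⟨z, hz⟩ := hreg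
    have hz' : k + 1 < incCount D z := by
      have := hP {z} (by simp)
      rw [meetCount_singleton] at this
      simp at this
      omega
    obtain ⟨e₀, he₀, hdet⟩ := exists_detachable hD hP hz'
    set D₁ : F → Finset W := Function.update D e₀ ((D e₀).erase z) with hD₁
    have hsub : ∀ e, D₁ e ⊆ D e := by
      intro e
      by_cases h : e = e₀
      · subst h; simp [hD₁, erase_subset]
      · simp [hD₁, h]
    have hlt : ∑ e, (D₁ e).card < n := by
      rw [← hn]
      refine sum_lt_sum (fun e _ => card_le_card (hsub e)) ⟨e₀, mem_univ _, ?_⟩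
      simpa [hD₁] using card_erase_lt_of_mem he₀
    have hP₁ : ∀ U : Finset W, Odd U.card → (U.card + 1) / 2 * k + 1 ≤ meetCount D₁ U := by
      intro U oU
      have hrest : ∀ e ∈ univ.erase e₀, (if Disjoint (D₁ e) U then 0 else 1)
          = if Disjoint (D e) U then 0 else 1 := by
        intro e he
        simp [hD₁, (mem_erase.1 he).1]
      have s0 := hP U oU
      have s1 : meetCount D U = _ := (add_sum_erase univ _ (mem_univ e₀)).symm
      have s2 : meetCount D₁ U = _ := (add_sum_erase univ _ (mem_univ e₀)).symm
      rw [sum_congr rfl hrest] at s2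
      have hv : D₁ e₀ = (D e₀).erase z := by simp [hD₁]
      rw [hv] at s2
      by_cases hzU : z ∈ U
      · by_cases tU : meetCount D U = (U.card + 1) / 2 * k + 1
        · have h := hdet U hzU oU tU
          rw [if_neg h] at s2
          have : (if Disjoint (D e₀) U then 0 else 1) ≤ 1 := by split_ifs <;> simp
          omega
        · have : (if Disjoint (D e₀) U then 0 else 1) ≤ 1 := by split_ifs <;> simp
          omega
      · have : Disjoint ((D e₀).erase z) U ↔ Disjoint (D e₀) U := by
          simp only [disjoint_left]
          grind
        simp only [this] at s2
        omega
    obtain ⟨D', h1, h2, h3⟩ := ih _ hlt D₁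
      (fun e => (card_le_card (hsub e)).trans (hD e)) hP₁ rfl
    exact ⟨D', fun e => (h1 e).trans (hsub e), h2, h3⟩

end Hyperedges

lemma exists_coloring_of_chromaticIndex_le {W F : Type} [Fintype W] [DecidableEq W] [Fintype F]
    (ends : F → Sym2 W) {n : ℕ} (h : chromaticIndex ends ≤ n) :
    ∃ c : F → Fin n, IsProperEdgeColoring ends c := by
  have hne : {k : ℕ | ∃ c : F → Fin k, IsProperEdgeColoring ends c}.Nonempty :=
    ⟨Fintype.card F, Fintype.equivFin F, fun v e f _ _ h => (Fintype.equivFin F).injective h⟩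
  obtain ⟨c, hc⟩ := Nat.sInf_mem hne
  exact ⟨fun e => Fin.castLE h (c e), fun v e f he hf hef => hc v e f he hf
    (Fin.castLE_injective h hef)⟩

/-- If all degrees are `k + 1`, the Goldberg–Seymour bound colors the hyperedges of size two
properly with the colors below `k + 2`. -/
lemma exists_proper_coloring_of_regular
    (GS : ∀ (W F : Type) [Fintype W] [DecidableEq W] [Fintype F]
      (ends' : F → Sym2 W), Loopless ends' →
      (chromaticIndex ends' : ℤ) ≤ max ((maxDegree ends' : ℤ) + 1) ⌈density ends'⌉)
    {W F : Type} [Fintype W] [DecidableEq W] [Fintype F] {k : ℕ} (D : F → Finset W)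
    (hP : ∀ U : Finset W, Odd U.card → (U.card + 1) / 2 * k + 1 ≤ meetCount D U)
    (hreg : ∀ v, incCount D v = k + 1) :
    ∃ c : F → ℕ, (∀ e, (D e).card = 2 → c e < k + 2) ∧
      ∀ v e f, (D e).card = 2 → (D f).card = 2 → v ∈ D e → v ∈ D f → c e = c f → e = f := by
  classical
  have hpair : ∀ e : {e : F // (D e).card = 2}, ∃ s : Sym2 W,
      ¬ s.IsDiag ∧ ∀ v, v ∈ s ↔ v ∈ D e := by
    intro e
    obtain ⟨x, y, hxy, he⟩ := card_eq_two.1 e.2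
    exact ⟨s(x, y), by simpa using hxy, fun v => by simp [he]⟩
  choose ends hloop hmem using hpair
  have hdeg : maxDegree ends ≤ k + 1 := by
    refine csSup_le' ?_
    rintro _ ⟨v, rfl⟩
    rw [← hreg v, mDegree, incCount, ← card_filter]
    refine card_le_card_of_injOn Subtype.val ?_ Subtype.val_injective.injOn
    intro e he
    simpa [hmem] using he
  have hdens : density ends ≤ k + 2 := by
    refine Real.sSup_le ?_ (by positivity)
    rintro _ ⟨U, ⟨hU3, oU⟩, rfl⟩
    have h3 : (3 : ℝ) ≤ U.card := by exact_mod_cast hU3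
    rw [div_le_iff₀ (by linarith)]
    have hsum := sum_incCount D U
    simp only [hreg, sum_const, smul_eq_mul] at hsum
    have hin : (edgesIn ends U).card ≤ ∑ e, if (D e ∩ U).card = 2 then 1 else 0 := by
      rw [← card_filter]
      refine card_le_card_of_injOn Subtype.val ?_ Subtype.val_injective.injOn
      intro e he
      simp only [edgesIn, hmem, coe_filter, mem_univ, true_and, Set.mem_ofPred_eq] at he ⊢
      rw [inter_eq_left.2 he, e.2]
    have hsplit : meetCount D U + (∑ e, if (D e ∩ U).card = 2 then 1 else 0)
        ≤ ∑ e, (D e ∩ U).card := by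
      unfold meetCount
      rw [← sum_add_distrib]
      refine sum_le_sum fun e _ => ?_
      by_cases hd : Disjoint (D e) U
      · simp [hd, disjoint_iff_inter_eq_empty.1 hd]
      · have := card_pos.2 (not_disjoint_iff_nonempty_inter.1 hd)
        rw [if_neg hd]
        split_ifs <;> omega
    have hPU := hP U oU
    obtain ⟨m, hm⟩ := oU
    have e1 : (U.card + 1) / 2 = m + 1 := by omega
    rw [e1] at hPU
    rw [hm] at hsum
    have hfin : (edgesIn ends U).card ≤ m * (k + 2) := by nlinarith
    have hfin' : ((edgesIn ends U).card : ℝ) ≤ m * (k + 2) := by exact_mod_cast hfin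
    rw [hm]
    push_cast
    nlinarith
  have hchi : chromaticIndex ends ≤ k + 2 := by
    have h := GS _ _ ends hloop
    have h2 : ⌈density ends⌉ ≤ (k : ℤ) + 2 := Int.ceil_le.2 (by push_cast; exact hdens)
    have h3 : max ((maxDegree ends : ℤ) + 1) ⌈density ends⌉ ≤ (k : ℤ) + 2 :=
      max_le (by omega) h2
    omega
  obtain ⟨c, hc⟩ := exists_coloring_of_chromaticIndex_le ends hchi
  refine ⟨fun e => if h : (D e).card = 2 then c ⟨e, h⟩ else 0, fun e he => ?_,
    fun v e f he hf hve hvf hef => ?_⟩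
  · simp [he]
  · simp only [he, hf, dif_pos] at hef
    have := hc v ⟨e, he⟩ ⟨f, hf⟩ ((hmem _ _).2 hve) ((hmem _ _).2 hvf) (Fin.ext hef)
    exact congrArg Subtype.val this

/-- The edges of size two with colors `k` and `k + 1`, together with the edges of size one, can be
recolored to supply each vertex with the colors below `k` that it misses. -/
lemma exists_cover_coloring_of_proper_coloring {W F : Type} [Fintype W] [DecidableEq W] [Fintype F]
    {k : ℕ} (D : F → Finset W) (hD : ∀ e, (D e).card ≤ 2) (hreg : ∀ v, incCount D v = k + 1)
    (c : F → ℕ) (hlt : ∀ e, (D e).card = 2 → c e < k + 2)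
    (hc : ∀ v e f, (D e).card = 2 → (D f).card = 2 → v ∈ D e → v ∈ D f → c e = c f → e = f) :
    ∃ g : F → ℕ, ∀ v, ∀ i < k, ∃ e, v ∈ D e ∧ g e = i := by
  classical
  let free : F → Prop := fun e => (D e).card = 2 → k ≤ c e
  let miss : W → Finset ℕ := fun v =>
    (range k).filter fun i => ∀ e, v ∈ D e → (D e).card = 2 → c e ≠ i
  have hmiss : ∀ v, 2 * (miss v).card ≤
      ∑ e, if v ∈ D e ∧ free e then 3 - (D e).card else 0 := by
    intro v
    set ones := univ.filter fun e => v ∈ D e ∧ (D e).card = 1 with hones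
    set low := univ.filter fun e => v ∈ D e ∧ (D e).card = 2 ∧ c e < k with hlow
    set high := univ.filter fun e => v ∈ D e ∧ (D e).card = 2 ∧ k ≤ c e with hhigh
    have htot : ones.card + low.card + high.card = k + 1 := by
      rw [← hreg v, incCount, hones, hlow, hhigh, card_filter, card_filter, card_filter,
        ← sum_add_distrib, ← sum_add_distrib]
      refine sum_congr rfl fun e _ => ?_
      by_cases hv : v ∈ D e
      · have := card_pos.2 ⟨v, hv⟩
        have := hD e
        simp only [hv, true_and, if_true]
        grind
      · simp [hv]
    have hsum : (∑ e, if v ∈ D e ∧ free e then 3 - (D e).card else 0)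
        = 2 * ones.card + high.card := by
      rw [hones, hhigh, card_filter, card_filter, mul_sum, ← sum_add_distrib]
      refine sum_congr rfl fun e _ => ?_
      by_cases hv : v ∈ D e
      · have := card_pos.2 ⟨v, hv⟩
        have := hD e
        simp only [hv, true_and, free]
        grind
      · simp [hv]
    have hpres : (miss v).card + low.card ≤ k := by
      have h1 : (low.image c).card = low.card := by
        refine card_image_of_injOn fun e he f hf hef => ?_
        simp only [hlow, coe_filter, mem_univ, true_and, Set.mem_ofPred_eq] at he hf
        exact hc v e f he.2.1 hf.2.1 he.1 hf.1 hef
      rw [← h1, ← card_union_of_disjoint]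
      · have : miss v ∪ low.image c ⊆ range k := by
          intro i
          simp only [miss, hlow]
          grind
        simpa using card_le_card this
      · rw [disjoint_left]
        simp only [miss, hlow]
        grind
    have hcov : k ≤ (miss v).card + low.card := by
      have : range k ⊆ miss v ∪ low.image c := by
        intro i hi
        simp only [miss, hlow]
        grind
      have h1 := card_le_card this
      rw [card_range] at h1
      exact h1.trans ((card_union_le _ _).trans (Nat.add_le_add_left card_image_le _))
    have hhi : high.card ≤ 2 := by
      have h1 : high.card ≤ ({k, k + 1} : Finset ℕ).card := by
        refine card_le_card_of_injOn c (fun e he => ?_) fun e he f hf hef => ?_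
        · simp only [hhigh, coe_filter, mem_univ, true_and, Set.mem_ofPred_eq] at he
          have := hlt e he.2.1
          simp only [coe_insert, coe_singleton, Set.mem_insert_iff, Set.mem_singleton_iff]
          omega
        · simp only [hhigh, coe_filter, mem_univ, true_and, Set.mem_ofPred_eq] at he hf
          exact hc v e f he.2.1 hf.2.1 he.1 hf.1 hef
      exact h1.trans (card_insert_le _ _)
    omega
  let avail : (Σ v : W, {i // i ∈ miss v}) → Finset F := fun p =>
    univ.filter fun e => p.1 ∈ D e ∧ free e
  obtain ⟨φ, hφ, hφm⟩ := (all_card_le_biUnion_card_iff_exists_injective avail).1 (by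
    intro S
    let N := S.biUnion avail
    have h1 : S.card ≤ ∑ v ∈ S.image Sigma.fst, (miss v).card := by
      have : S ⊆ (S.image Sigma.fst).sigma fun v => (univ : Finset {i // i ∈ miss v}) := by
        intro p hp
        simp only [mem_sigma, mem_univ, and_true]
        exact mem_image_of_mem _ hp
      refine (card_le_card this).trans ?_
      simp [card_sigma]
    have h2 : 2 * S.card ≤ ∑ e, ∑ v ∈ S.image Sigma.fst,
        if v ∈ D e ∧ free e then 3 - (D e).card else 0 := by
      rw [sum_comm]
      refine (Nat.mul_le_mul_left 2 h1).trans ?_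
      rw [mul_sum]
      exact sum_le_sum fun v _ => hmiss v
    have h3 : ∀ e, (∑ v ∈ S.image Sigma.fst,
        if v ∈ D e ∧ free e then 3 - (D e).card else 0) ≤ if e ∈ N then 2 else 0 := by
      intro e
      by_cases he : e ∈ N
      · rw [if_pos he]
        calc _ ≤ ∑ v ∈ S.image Sigma.fst, if v ∈ D e then 3 - (D e).card else 0 := by
              refine sum_le_sum fun v _ => ?_
              by_cases hv : v ∈ D e <;> by_cases hf : free e <;> simp [hv, hf]
          _ = ((S.image Sigma.fst) ∩ D e).card * (3 - (D e).card) := by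
              rw [← sum_filter, filter_mem_eq_inter, sum_const, smul_eq_mul]
          _ ≤ (D e).card * (3 - (D e).card) :=
              Nat.mul_le_mul_right _ (card_le_card inter_subset_right)
          _ ≤ 2 := by
              have := hD e
              interval_cases (D e).card <;> simp
      · rw [if_neg he]
        refine (sum_eq_zero fun v hv => if_neg fun hvf => he ?_).le
        obtain ⟨p, hp, rfl⟩ := mem_image.1 hv
        exact mem_biUnion.2 ⟨p, hp, by simpa [avail] using hvf⟩
    have h4 := h2.trans (sum_le_sum fun e _ => h3 e)
    rw [← sum_filter, filter_mem_eq_inter, univ_inter, sum_const, smul_eq_mul] at h4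
    change S.card ≤ N.card
    omega)
  refine ⟨fun e => if h : ∃ p, φ p = e then (h.choose.2 : ℕ) else c e, fun v i hi => ?_⟩
  by_cases hm : i ∈ miss v
  · have h := hφm ⟨v, i, hm⟩
    simp only [avail, mem_filter, mem_univ, true_and] at h
    refine ⟨φ ⟨v, i, hm⟩, h.1, ?_⟩
    have hex : ∃ p, φ p = φ ⟨v, i, hm⟩ := ⟨_, rfl⟩
    beta_reduce
    rw [dif_pos hex, hφ hex.choose_spec]
  · simp only [miss, mem_filter, mem_range, hi, true_and] at hm
    push Not at hm
    obtain ⟨e, hve, he2, hce⟩ := hm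
    refine ⟨e, hve, ?_⟩
    beta_reduce
    rw [dif_neg, hce]
    rintro ⟨p, rfl⟩
    have h := hφm p
    simp only [avail, mem_filter, mem_univ, true_and] at h
    have := h.2 he2
    omega

/-- Assuming the Goldberg–Seymour conjecture, if all vertices of `Z` have degree at least `k + 1`
and more than `((|U|+1)/2)·k` edges meet each odd set `U ⊆ Z`, then the edges can be colored so
that every vertex of `Z` sees all colors below `k`. -/
lemma exists_cover_coloring
    (GS : ∀ (W F : Type) [Fintype W] [DecidableEq W] [Fintype F]
      (ends' : F → Sym2 W), Loopless ends' →
      (chromaticIndex ends' : ℤ) ≤ max ((maxDegree ends' : ℤ) + 1) ⌈density ends'⌉)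
    {V E : Type} [Fintype V] [DecidableEq V] [Fintype E] (ends : E → Sym2 V) (Z : Finset V) (k : ℕ)
    (hdeg : ∀ z ∈ Z, k + 1 ≤ mDegree ends z)
    (hco : ∀ U : Finset V, U ⊆ Z → IsOddSet U →
      (U.card + 1) / 2 * k + 1 ≤ (edgesPlus ends U).card) :
    ∃ g : E → ℕ, ∀ z ∈ Z, ∀ i < k, ∃ e, z ∈ ends e ∧ g e = i := by
  classical
  let D : E → Finset Z := fun e => univ.filter fun z => (z : V) ∈ ends e
  have hD : ∀ e, (D e).card ≤ 2 := by
    intro e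
    have h : ((D e).map (Function.Embedding.subtype _)) ⊆ (ends e).toFinset := by
      intro v
      simp only [D, mem_map, mem_filter, mem_univ, true_and, Sym2.mem_toFinset]
      rintro ⟨z, hz, rfl⟩
      exact hz
    have h2 := card_le_card h
    rw [card_map] at h2
    refine h2.trans ?_
    rw [Sym2.card_toFinset]
    split_ifs <;> simp
  have hP : ∀ U : Finset Z, Odd U.card → (U.card + 1) / 2 * k + 1 ≤ meetCount D U := by
    intro U oU
    by_cases h1 : U.card = 1
    · obtain ⟨z, rfl⟩ := card_eq_one.1 h1
      rw [meetCount_singleton, incCount, ← card_filter]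
      simpa [D, mDegree] using hdeg z z.2
    · have h := hco (U.map (Function.Embedding.subtype _)) (by
          intro v
          simp only [mem_map]
          rintro ⟨z, -, rfl⟩
          exact z.2) ⟨by rw [card_map]; grind, by rwa [card_map]⟩
      rw [card_map] at h
      refine h.trans ?_
      have hcount : meetCount D U = (univ.filter fun e => ¬ Disjoint (D e) U).card := by
        simp only [meetCount, card_filter, ite_not]
      rw [hcount]
      refine card_le_card fun e => ?_
      simp only [edgesPlus, mem_filter, mem_univ, true_and, mem_map, not_disjoint_iff]
      rintro ⟨v, hv, z, hz, rfl⟩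
      exact ⟨z, by simpa [D] using hv, hz⟩
  obtain ⟨D', hsub, hP', hreg⟩ := exists_regular_shrinking D hD hP
  obtain ⟨c, hlt, hc⟩ := exists_proper_coloring_of_regular GS D' hP' hreg
  obtain ⟨g, hg⟩ := exists_cover_coloring_of_proper_coloring D'
    (fun e => (card_le_card (hsub e)).trans (hD e)) hreg c hlt hc
  refine ⟨g, fun z hz i hi => ?_⟩
  obtain ⟨e, he, hge⟩ := hg ⟨z, hz⟩ i hi
  exact ⟨e, by simpa [D] using hsub e he, hge⟩

/-- Assuming the Goldberg–Seymour conjecture, if every vertex of `Z` has degree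
at least `k+1` and `|E⁺(U)| ≥ ((|U|+1)/2)·k + ε` for every odd set `U ⊆ Z`, then `G` contains
`k−1+ε` pairwise disjoint `Z`-covers. -/
theorem stmt_2
    (GS : ∀ (W F : Type) [Fintype W] [DecidableEq W] [Fintype F]
      (ends' : F → Sym2 W), Loopless ends' →
      (chromaticIndex ends' : ℤ) ≤ max ((maxDegree ends' : ℤ) + 1) ⌈density ends'⌉)
    {V E : Type} [Fintype V] [DecidableEq V] [Fintype E]
    (ends : E → Sym2 V) (hG : Loopless ends)
    (Z : Finset V) (k ε : ℕ) (hk : 0 < k) (hε : ε = 0 ∨ ε = 1)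
    (hdeg : ∀ z ∈ Z, k + 1 ≤ mDegree ends z)
    (hco : ∀ U : Finset V, U ⊆ Z → IsOddSet U →
      (U.card + 1) / 2 * k + ε ≤ (edgesPlus ends U).card) :
    ∃ C : Fin (k - 1 + ε) → Finset E,
      (∀ i, ∀ z ∈ Z, ∃ e ∈ C i, z ∈ ends e) ∧
      (∀ i j, i ≠ j → Disjoint (C i) (C j)) := by
  obtain ⟨g, hg⟩ := exists_cover_coloring GS ends Z (k - 1 + ε)
    (fun z hz => le_trans (by omega) (hdeg z hz)) (fun U hU oU => by
      refine le_trans ?_ (hco U hU oU)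
      rcases hε with rfl | rfl
      · obtain ⟨j, rfl⟩ : ∃ j, k = j + 1 := ⟨k - 1, by omega⟩
        have h3 := oU.1
        have : 1 ≤ (U.card + 1) / 2 := by omega
        simp only [Nat.add_sub_cancel, add_zero, mul_add, mul_one]
        omega
      · rw [Nat.sub_add_cancel hk])
  refine ⟨fun i => univ.filter fun e => g e = i, fun i z hz => ?_, fun i j hij => ?_⟩
  · obtain ⟨e, he, hge⟩ := hg z hz i i.2
    exact ⟨e, by simpa using hge, he⟩
  · rw [disjoint_left]
    intro e hi hj
    simp only [mem_filter, mem_univ, true_and] at hi hj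
    exact hij (Fin.ext (hi.symm.trans hj))
end
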